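/- arXiv:1512.06209 — 2 statements merged into one kernel-verified Lean document; each statement's English description precedes it below -/
import Mathlib

section
/- Let $k_1,k_2,k_3$ be real constants with $k_2>0$, and let $b\ge 0$. Then the following are equivalent: (a) for all real $s$ with $|s|\le b$, both $1+k_1b^2+(k_3+k_2b^2)s^2>0$ and $1+(k_1+k_3)s^2+k_2s^4>0$; (b) $1+k_1b^2>0$ and $1+(k_1+k_3)b^2+k_2b^4>0$, and at least one of the following holds: (i) $k_1+k_3\ge0$; (ii) $k_1+k_3+2k_2b^2\le0$ and $1+(k_1+k_3)b^2+k_2b^4>0$; (iii) $k_1+k_3+2k_2b^2>0$ and $4k_2-(k_1+k_3)^2>0$. -/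
/-!
With `t = s²` and `B = b²`, the two inequalities concern an affine and a quadratic function of
`t ∈ [0, B]` which take the same value at `t = B`. The affine function only needs to be positive
at the two ends. A quadratic which is positive at both ends can fail to be positive in between only
if its slope is negative at the left end and positive at the right end; then it is convex with its
vertex inside the interval, and positivity there is negativity of the discriminant.
-/

section Ring

variable {R : Type*} [CommRing R] (a b c x y : R)

theorem quadratic_sub_quadratic :
    (c + b * y + a * y ^ 2) - (c + b * x + a * x ^ 2) = (y - x) * (b + a * (x + y)) := by
  ring

theorem four_mul_quadratic_eq_sq_sub_discrim :
    4 * a * (c + b * x + a * x ^ 2) = (b + 2 * a * x) ^ 2 - discrim a b c := by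
  rw [discrim]
  ring

end Ring

section OrderedRing

variable {R : Type*} [CommRing R] [LinearOrder R] [IsStrictOrderedRing R] {a b c x y t : R}

theorem quadratic_le_of_secant_nonneg (hxy : x ≤ y) (hslope : 0 ≤ b + a * (x + y)) :
    c + b * x + a * x ^ 2 ≤ c + b * y + a * y ^ 2 := by
  rw [← sub_nonneg, quadratic_sub_quadratic]
  exact mul_nonneg (sub_nonneg.2 hxy) hslope

theorem quadratic_le_of_secant_nonpos (hxy : x ≤ y) (hslope : b + a * (x + y) ≤ 0) :
    c + b * y + a * y ^ 2 ≤ c + b * x + a * x ^ 2 := by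
  rw [← sub_nonpos, quadratic_sub_quadratic]
  exact mul_nonpos_of_nonneg_of_nonpos (sub_nonneg.2 hxy) hslope

theorem min_le_quadratic_of_nonpos (ha : a ≤ 0) (ht : t ∈ Set.Icc x y) :
    min (c + b * x + a * x ^ 2) (c + b * y + a * y ^ 2) ≤ c + b * t + a * t ^ 2 := by
  rcases le_total 0 (b + a * (x + t)) with hslope | hslope
  · exact min_le_of_left_le (quadratic_le_of_secant_nonneg ht.1 hslope)
  · have hslope' : b + a * (t + y) ≤ 0 := by
      linarith [mul_le_mul_of_nonpos_left (ht.1.trans ht.2) ha]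
    exact min_le_of_right_le (quadratic_le_of_secant_nonpos ht.2 hslope')

theorem quadratic_le_of_deriv_left_nonneg (ha : 0 ≤ a) (hxt : x ≤ t) (hx : 0 ≤ b + 2 * a * x) :
    c + b * x + a * x ^ 2 ≤ c + b * t + a * t ^ 2 :=
  quadratic_le_of_secant_nonneg hxt (by linarith [mul_le_mul_of_nonneg_left hxt ha])

theorem quadratic_le_of_deriv_right_nonpos (ha : 0 ≤ a) (hty : t ≤ y) (hy : b + 2 * a * y ≤ 0) :
    c + b * y + a * y ^ 2 ≤ c + b * t + a * t ^ 2 :=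
  quadratic_le_of_secant_nonpos hty (by linarith [mul_le_mul_of_nonneg_left hty ha])

theorem quadratic_pos_of_discrim_neg (ha : 0 < a) (hdiscrim : discrim a b c < 0) (t : R) :
    0 < c + b * t + a * t ^ 2 := by
  have hmul : 0 < 4 * a * (c + b * t + a * t ^ 2) := by
    rw [four_mul_quadratic_eq_sq_sub_discrim]
    linarith [sq_nonneg (b + 2 * a * t)]
  exact pos_of_mul_pos_right hmul (by positivity)

theorem quadratic_pos_of_mem_Icc (ht : t ∈ Set.Icc x y)
    (hx : 0 < c + b * x + a * x ^ 2) (hy : 0 < c + b * y + a * y ^ 2)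
    (hvertex : 0 ≤ b + 2 * a * x ∨ b + 2 * a * y ≤ 0 ∨ discrim a b c < 0) :
    0 < c + b * t + a * t ^ 2 := by
  rcases le_or_gt a 0 with ha | ha
  · exact (lt_min hx hy).trans_le (min_le_quadratic_of_nonpos ha ht)
  · rcases hvertex with hleft | hright | hdiscrim
    · exact hx.trans_le (quadratic_le_of_deriv_left_nonneg ha.le ht.1 hleft)
    · exact hy.trans_le (quadratic_le_of_deriv_right_nonpos ha.le ht.2 hright)
    · exact quadratic_pos_of_discrim_neg ha hdiscrim t

end OrderedRing

section OrderedField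

variable {K : Type*} [Field K] [LinearOrder K] [IsStrictOrderedRing K] {a b c x y : K}

theorem discrim_neg_of_quadratic_vertex_pos (ha : 0 < a)
    (hpos : 0 < c + b * (-b / (2 * a)) + a * (-b / (2 * a)) ^ 2) : discrim a b c < 0 := by
  have hsq := four_mul_quadratic_eq_sq_sub_discrim a b c (-b / (2 * a))
  rw [mul_div_cancel₀ _ (by positivity), add_neg_cancel, zero_pow two_ne_zero, zero_sub] at hsq
  rw [← neg_pos, ← hsq]
  positivity

theorem forall_mem_Icc_quadratic_pos_iff (hxy : x ≤ y) :
    (∀ t ∈ Set.Icc x y, 0 < c + b * t + a * t ^ 2) ↔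
      (0 < c + b * x + a * x ^ 2 ∧ 0 < c + b * y + a * y ^ 2) ∧
        (0 ≤ b + 2 * a * x ∨ b + 2 * a * y ≤ 0 ∨ discrim a b c < 0) := by
  refine ⟨fun hpos ↦ ⟨⟨hpos x (Set.left_mem_Icc.2 hxy), hpos y (Set.right_mem_Icc.2 hxy)⟩, ?_⟩,
    fun ⟨⟨hx, hy⟩, hvertex⟩ t ht ↦ quadratic_pos_of_mem_Icc ht hx hy hvertex⟩
  rw [or_iff_not_imp_left, or_iff_not_imp_left, not_le, not_le]
  intro hleft hright
  have ha : 0 < a := pos_of_mul_pos_left (by linarith : 0 < a * (y - x)) (sub_nonneg.2 hxy)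
  have hvertex : -b / (2 * a) ∈ Set.Icc x y :=
    ⟨(le_div_iff₀ (by positivity)).2 (by linarith), (div_le_iff₀ (by positivity)).2 (by linarith)⟩
  exact discrim_neg_of_quadratic_vertex_pos ha (hpos _ hvertex)

theorem forall_mem_Icc_affine_pos_iff (hxy : x ≤ y) :
    (∀ t ∈ Set.Icc x y, 0 < c + b * t) ↔ 0 < c + b * x ∧ 0 < c + b * y := by
  have hslope : 0 ≤ b ∨ b ≤ 0 ∨ discrim 0 b c < 0 := (le_total 0 b).imp_right Or.inl
  simpa [hslope] using forall_mem_Icc_quadratic_pos_iff (a := 0) (b := b) (c := c) hxy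

end OrderedField

theorem forall_abs_le_sq_iff {b : ℝ} (hb : 0 ≤ b) (p : ℝ → Prop) :
    (∀ s, |s| ≤ b → p (s ^ 2)) ↔ ∀ t ∈ Set.Icc 0 (b ^ 2), p t := by
  refine ⟨fun h t ht ↦ ?_, fun h s hs ↦ h _ ⟨sq_nonneg s, sq_le_sq.2 (hs.trans (le_abs_self b))⟩⟩
  have hsqrt : |√t| ≤ b := by
    rw [abs_of_nonneg (Real.sqrt_nonneg t)]
    exact Real.sqrt_le_iff.2 ⟨hb, ht.2⟩
  simpa only [Real.sq_sqrt ht.1] using h (√t) hsqrt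

theorem stmt_3_general (k₁ k₂ k₃ b : ℝ) (hb : 0 ≤ b) :
    (∀ s : ℝ, |s| ≤ b →
        0 < 1 + k₁ * b ^ 2 + (k₃ + k₂ * b ^ 2) * s ^ 2 ∧
        0 < 1 + (k₁ + k₃) * s ^ 2 + k₂ * s ^ 4)
      ↔ ((0 < 1 + k₁ * b ^ 2 ∧ 0 < 1 + (k₁ + k₃) * b ^ 2 + k₂ * b ^ 4) ∧
          (0 ≤ k₁ + k₃ ∨
           (k₁ + k₃ + 2 * k₂ * b ^ 2 ≤ 0 ∧ 0 < 1 + (k₁ + k₃) * b ^ 2 + k₂ * b ^ 4) ∨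
           (0 < k₁ + k₃ + 2 * k₂ * b ^ 2 ∧ 0 < 4 * k₂ - (k₁ + k₃) ^ 2))) := by
  have haffine := forall_mem_Icc_affine_pos_iff (b := k₃ + k₂ * b ^ 2) (c := 1 + k₁ * b ^ 2)
    (sq_nonneg b)
  have hquadratic := forall_mem_Icc_quadratic_pos_iff (a := k₂) (b := k₁ + k₃) (c := 1)
    (sq_nonneg b)
  rw [← forall_abs_le_sq_iff hb] at haffine hquadratic
  have hend : 1 + k₁ * b ^ 2 + (k₃ + k₂ * b ^ 2) * b ^ 2 =
      1 + (k₁ + k₃) * b ^ 2 + k₂ * b ^ 4 := by ring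
  have hdiscrim : discrim k₂ (k₁ + k₃) 1 < 0 ↔ 0 < 4 * k₂ - (k₁ + k₃) ^ 2 := by
    rw [discrim, mul_one, sub_neg, sub_pos]
  have hfour (s : ℝ) : (s ^ 2) ^ 2 = s ^ 4 := (pow_mul s 2 2).symm
  simp only [hend, hdiscrim, hfour, mul_zero, add_zero, zero_pow two_ne_zero, zero_lt_one,
    true_and] at haffine hquadratic
  simp only [forall_and, haffine, hquadratic]
  have hslope := lt_iff_not_ge (a := 0) (b := k₁ + k₃ + 2 * k₂ * b ^ 2)
  tauto

/-- Proposition 2.1(ii): for `k₂ > 0` and `b ≥ 0`, the regularity inequalities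
hold for all `|s| ≤ b` iff `b²` lies in the set `S ∩ T` described by the stated
polynomial conditions. -/
theorem stmt_3 (k₁ k₂ k₃ b : ℝ) (hk₂ : 0 < k₂) (hb : 0 ≤ b) :
    (∀ s : ℝ, |s| ≤ b →
        0 < 1 + k₁ * b ^ 2 + (k₃ + k₂ * b ^ 2) * s ^ 2 ∧
        0 < 1 + (k₁ + k₃) * s ^ 2 + k₂ * s ^ 4)
      ↔ ((0 < 1 + k₁ * b ^ 2 ∧ 0 < 1 + (k₁ + k₃) * b ^ 2 + k₂ * b ^ 4) ∧
          (0 ≤ k₁ + k₃ ∨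
           (k₁ + k₃ + 2 * k₂ * b ^ 2 ≤ 0 ∧ 0 < 1 + (k₁ + k₃) * b ^ 2 + k₂ * b ^ 4) ∨
           (0 < k₁ + k₃ + 2 * k₂ * b ^ 2 ∧ 0 < 4 * k₂ - (k₁ + k₃) ^ 2))) :=
  stmt_3_general k₁ k₂ k₃ b hb
end

section
/- Let $\mu>0$ and $\delta>0$ be real constants with $\mu^2>12\delta^2$, set $t_o:=\frac{2\delta}{\sqrt{\mu^2-4\delta^2}}$, $t_1:=\frac{\sqrt{2}\,\delta}{\sqrt{\mu^2-6\delta^2}}$, $\widetilde{D}:=\{(s,t)\in\mathbb{R}^2:0\le t\le t_o,\ |s|\le t\}$, and define $\widetilde{R}(s,t):=\dfrac{(1+t^2)^2\big[2(4\delta^2-\mu^2)(1+5s^2)t^2+3\mu^2s^4-4(\mu^2-10\delta^2)s^2+\mu^2+8\delta^2\big]}{\mu(1-s^2)^4}$. Then $\min_{(s,t)\in\widetilde{D}}\widetilde{R}(s,t)=\dfrac{\mu^5(\mu^2-16\delta^2)}{(\mu^2-8\delta^2)^3}=\widetilde{R}(\pm t_o,t_o)$ and $\max_{(s,t)\in\widetilde{D}}\widetilde{R}(s,t)=\dfrac{(\mu^2-4\delta^2)^4}{\mu(\mu^2-8\delta^2)^3}=\widetilde{R}(\pm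 t_1,t_1)$. (Note that $t_o<1$, so $\widetilde R$ is well defined on $\widetilde D$.) -/
/-- The two-variable flag-curvature function (formula (49) of the paper) of `F₀⁻`. -/
noncomputable def Rminus (μ δ s t : ℝ) : ℝ :=
  ((1 + t ^ 2) ^ 2 *
      (2 * (4 * δ ^ 2 - μ ^ 2) * (1 + 5 * s ^ 2) * t ^ 2 + 3 * μ ^ 2 * s ^ 4
        - 4 * (μ ^ 2 - 10 * δ ^ 2) * s ^ 2 + μ ^ 2 + 8 * δ ^ 2)) /
    (μ * (1 - s ^ 2) ^ 4)

/-!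
Put `τ = t_o²`, `x = s²`, `y = t²`. Then `D̃` becomes `0 ≤ x ≤ y ≤ τ < 1`, and

`R̃ / μ = (1 + y)² (3 (1 + τ) (1 + x)² - 2 (1 + 5 x) (1 + y)) / ((1 + τ) (1 - x)⁴)`.

For fixed `x` the numerator is a cubic `p² (A - B p)` in `p = 1 + y`, which increases up to
`p = 2 A / (3 B)` and decreases afterwards. Hence its minimum is at `y = x` or `y = τ`. If its peak
lies left of `p = 1 + x`, its maximum is at `y = x`; otherwise it is at most `4 A³ / (27 B²)`.
On the diagonal, `R̃ / μ` is `1 / ((1 + τ) (1 - τ)³)` times the quartic `v³ (4 - 3 v)` of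
`v = (1 - τ) (1 + x) / (1 - x)`. That quartic peaks at `v = 1`, which is `x = t₁²`, and both upper
bounds reduce to `v³ (4 - 3 v) ≤ 1`.
-/

section Polynomials

theorem monotoneOn_sq_mul_sub {A B : ℝ} (hB : 0 ≤ B) :
    MonotoneOn (fun p : ℝ ↦ p ^ 2 * (A - B * p)) {p | 0 ≤ p ∧ 3 * B * p ≤ 2 * A} := by
  rintro q ⟨hq, -⟩ p ⟨hp, hpeak⟩ hqp
  have hslope : B * (p ^ 2 + p * q + q ^ 2) ≤ A * (p + q) := by
    have hgap : 0 ≤ B * ((p - q) * (p + 2 * q)) :=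
      mul_nonneg hB (mul_nonneg (sub_nonneg.2 hqp) (by positivity))
    linarith [mul_le_mul_of_nonneg_right hpeak (add_nonneg hp hq)]
  change q ^ 2 * (A - B * q) ≤ p ^ 2 * (A - B * p)
  linarith [mul_le_mul_of_nonneg_left hslope (sub_nonneg.2 hqp)]

theorem antitoneOn_sq_mul_sub {A B : ℝ} (hB : 0 ≤ B) :
    AntitoneOn (fun p : ℝ ↦ p ^ 2 * (A - B * p)) {p | 0 ≤ p ∧ 2 * A ≤ 3 * B * p} := by
  rintro q ⟨hq, hpeak⟩ p ⟨hp, -⟩ hqp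
  have hslope : A * (p + q) ≤ B * (p ^ 2 + p * q + q ^ 2) := by
    have hgap : 0 ≤ B * ((p - q) * (2 * p + q)) :=
      mul_nonneg hB (mul_nonneg (sub_nonneg.2 hqp) (by positivity))
    linarith [mul_le_mul_of_nonneg_right hpeak (add_nonneg hp hq)]
  change p ^ 2 * (A - B * p) ≤ q ^ 2 * (A - B * q)
  linarith [mul_le_mul_of_nonneg_left hslope (sub_nonneg.2 hqp)]

theorem sq_mul_sq_mul_sub_le {A B p : ℝ} (hA : 0 ≤ A) (hB : 0 ≤ B) (hp : 0 ≤ p) :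
    27 * (B ^ 2 * (p ^ 2 * (A - B * p))) ≤ 4 * A ^ 3 := by
  have hgap : 0 ≤ (3 * B * p - 2 * A) ^ 2 * (3 * B * p + A) := by positivity
  linarith

theorem cube_mul_sub_le_pow_four (r v : ℝ) : v ^ 3 * (4 * r - 3 * v) ≤ r ^ 4 := by
  have hgap : 0 ≤ (v - r) ^ 2 * (2 * v ^ 2 + (v + r) ^ 2) := by positivity
  linarith

/-- The quartic `v³ (4 r - 3 v)` falls off faster to the right of its peak `v = r` than to the
left. -/
theorem cube_mul_sub_le_cube_mul_sub {r v w : ℝ} (hvw : v ≤ w) (hsum : 0 ≤ v + w)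
    (hr : 2 * r ≤ v + w) : w ^ 3 * (4 * r - 3 * w) ≤ v ^ 3 * (4 * r - 3 * v) := by
  have hvw' : 0 ≤ w - v := sub_nonneg.2 hvw
  have hsq : 0 ≤ v ^ 2 + v * w + w ^ 2 := by nlinarith [sq_nonneg (v + w)]
  have hgap : 0 ≤ (w - v) * ((v + w) * (w - v) ^ 2) := by positivity
  linarith [mul_le_mul_of_nonneg_left (mul_le_mul_of_nonneg_right hr hsq) hvw']

theorem one_sub_three_mul_mul_cube_le {x z : ℝ} (hx : 0 ≤ x) (hxz : x ≤ z) (hz : z ≤ 1) :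
    (1 - 3 * z) * (1 - x) ^ 3 ≤ (1 - 3 * x) * (1 - z) ^ 3 := by
  have hprod : 0 ≤ (1 - x) * (1 - z) := mul_nonneg (by linarith) (by linarith)
  have hgap : 0 ≤ (z - x) * (2 * (z - x) ^ 2 + 3 * ((1 - x) * (1 - z) * (x + z))) :=
    mul_nonneg (by linarith) (add_nonneg (by positivity)
      (mul_nonneg (by norm_num) (mul_nonneg hprod (by linarith))))
  linarith

end Polynomials

section NormalizedCurvature

/-- The numerator of `R̃ / μ` in the variables `τ = t_o²`, `x = s²`, `y = t²`. -/
def curvatureNumerator (τ x y : ℝ) : ℝ :=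
  (1 + y) ^ 2 * (3 * (1 + τ) * (1 + x) ^ 2 - 2 * (1 + 5 * x) * (1 + y))

/-- The function `R̃ / μ` in the variables `τ = t_o²`, `x = s²`, `y = t²`; it has the junk value `0`
at `x = 1` and at `τ = -1`. -/
noncomputable def normalizedCurvature (τ x y : ℝ) : ℝ :=
  curvatureNumerator τ x y / ((1 + τ) * (1 - x) ^ 4)

variable {τ x y : ℝ}

theorem curvatureNumerator_self (τ x : ℝ) :
    curvatureNumerator τ x x = (1 + x) ^ 3 * (4 * (1 - x) - 3 * ((1 - τ) * (1 + x))) := by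
  rw [curvatureNumerator]; ring

theorem curvatureNumerator_boundary (τ x : ℝ) :
    curvatureNumerator τ x τ = (1 + τ) ^ 3 * ((1 - x) * (1 - 3 * x)) := by
  rw [curvatureNumerator]; ring

theorem min_le_curvatureNumerator (hx : 0 ≤ x) (hxy : x ≤ y) (hyτ : y ≤ τ) :
    min (curvatureNumerator τ x x) (curvatureNumerator τ x τ) ≤ curvatureNumerator τ x y := by
  have hB : 0 ≤ 2 * (1 + 5 * x) := by linarith
  have hy : 0 ≤ 1 + y := by linarith
  rw [min_le_iff]
  rcases le_total (3 * (2 * (1 + 5 * x)) * (1 + y)) (2 * (3 * (1 + τ) * (1 + x) ^ 2))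
    with hpeak | hpeak
  · refine .inl (monotoneOn_sq_mul_sub hB ⟨by linarith, ?_⟩ ⟨hy, hpeak⟩ (by linarith))
    exact le_trans (by gcongr) hpeak
  · refine .inr (antitoneOn_sq_mul_sub hB ⟨hy, hpeak⟩ ⟨by linarith, ?_⟩ (by linarith))
    exact le_trans hpeak (by gcongr)

theorem curvatureNumerator_self_mul_le (τ x : ℝ) :
    curvatureNumerator τ x x * (1 - τ) ^ 3 ≤ (1 - x) ^ 4 := by
  rw [curvatureNumerator_self]
  linarith [cube_mul_sub_le_pow_four (1 - x) ((1 - τ) * (1 + x))]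

theorem curvatureNumerator_le_self (hx : 0 ≤ x) (hxy : x ≤ y)
    (hpeak : (1 + τ) * (1 + x) ≤ 1 + 5 * x) :
    curvatureNumerator τ x y ≤ curvatureNumerator τ x x := by
  have hB : 0 ≤ 2 * (1 + 5 * x) := by linarith
  have hx' : 0 ≤ 1 + x := by linarith
  have hpeak' : 2 * (3 * (1 + τ) * (1 + x) ^ 2) ≤ 3 * (2 * (1 + 5 * x)) * (1 + x) := by
    linarith [mul_le_mul_of_nonneg_right hpeak hx']
  exact antitoneOn_sq_mul_sub hB ⟨hx', hpeak'⟩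
    ⟨by linarith, hpeak'.trans (by gcongr)⟩ (by linarith)

theorem one_sub_sq_mul_sq_le (hx : 0 ≤ x) (hpeak : 1 + 5 * x ≤ (1 + τ) * (1 + x)) :
    (1 + τ) * (1 - τ) * (1 + x) ^ 2 ≤ (1 + 5 * x) * (1 - 3 * x) := by
  have hsum : 0 ≤ (1 + τ) * (1 + x) + (1 + 5 * x) - 2 * (1 + x) := by linarith
  linarith [mul_nonneg (sub_nonneg.2 hpeak) hsum]

theorem curvatureNumerator_mul_le_of_le_peak (hx : 0 ≤ x) (hy : 0 ≤ y) (hτ : 0 ≤ τ) (hτ1 : τ ≤ 1)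
    (hpeak : 1 + 5 * x ≤ (1 + τ) * (1 + x)) :
    curvatureNumerator τ x y * (1 - τ) ^ 3 ≤ (1 - x) ^ 4 := by
  have hτ' : 0 ≤ 1 - τ := sub_nonneg.2 hτ1
  have hcubic : (1 + 5 * x) ^ 2 * curvatureNumerator τ x y ≤ ((1 + τ) * (1 + x) ^ 2) ^ 3 := by
    have := sq_mul_sq_mul_sub_le (A := 3 * (1 + τ) * (1 + x) ^ 2) (B := 2 * (1 + 5 * x))
      (p := 1 + y) (by positivity) (by positivity) (by positivity)
    rw [curvatureNumerator]
    linarith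
  refine le_of_mul_le_mul_left ?_ (show 0 < (1 + 5 * x) ^ 2 by positivity)
  calc (1 + 5 * x) ^ 2 * (curvatureNumerator τ x y * (1 - τ) ^ 3)
      = (1 + 5 * x) ^ 2 * curvatureNumerator τ x y * (1 - τ) ^ 3 := by ring
    _ ≤ ((1 + τ) * (1 + x) ^ 2) ^ 3 * (1 - τ) ^ 3 := by gcongr
    _ = ((1 + τ) * (1 - τ) * (1 + x) ^ 2) ^ 3 := by ring
    _ ≤ ((1 + 5 * x) * (1 - 3 * x)) ^ 3 :=
        pow_le_pow_left₀ (by positivity) (one_sub_sq_mul_sq_le hx hpeak) 3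
    _ = (1 + 5 * x) ^ 2 * ((1 - 3 * x) ^ 3 * (4 * (1 - x) - 3 * (1 - 3 * x))) := by ring
    _ ≤ (1 + 5 * x) ^ 2 * (1 - x) ^ 4 := by
        gcongr
        exact cube_mul_sub_le_pow_four (1 - x) (1 - 3 * x)

theorem curvatureNumerator_mul_le (hx : 0 ≤ x) (hxy : x ≤ y) (hτ : 0 ≤ τ) (hτ1 : τ ≤ 1) :
    curvatureNumerator τ x y * (1 - τ) ^ 3 ≤ (1 - x) ^ 4 := by
  rcases le_total ((1 + τ) * (1 + x)) (1 + 5 * x) with hpeak | hpeak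
  · have hτ' : 0 ≤ (1 - τ) ^ 3 := pow_nonneg (sub_nonneg.2 hτ1) 3
    exact (mul_le_mul_of_nonneg_right (curvatureNumerator_le_self hx hxy hpeak) hτ').trans
      (curvatureNumerator_self_mul_le τ x)
  · exact curvatureNumerator_mul_le_of_le_peak hx (hx.trans hxy) hτ hτ1 hpeak

theorem le_curvatureNumerator_self_mul (hx : 0 ≤ x) (hxτ : x ≤ τ) (hτ1 : τ ≤ 1) :
    (1 - 3 * τ) * (1 + τ) ^ 3 * (1 - x) ^ 4 ≤ curvatureNumerator τ x x * (1 - τ) ^ 3 := by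
  have hsum : 2 * (1 - x) ≤ (1 - τ) * (1 + x) + (1 + τ) * (1 - x) := by
    linarith [mul_nonneg hx (sub_nonneg.2 hτ1)]
  have hquartic := cube_mul_sub_le_cube_mul_sub (r := 1 - x) (v := (1 - τ) * (1 + x))
    (w := (1 + τ) * (1 - x)) (by linarith) (by linarith) hsum
  rw [curvatureNumerator_self]
  linarith

theorem le_curvatureNumerator_boundary_mul (hx : 0 ≤ x) (hxτ : x ≤ τ) (hτ1 : τ ≤ 1) :
    (1 - 3 * τ) * (1 + τ) ^ 3 * (1 - x) ^ 4 ≤ curvatureNumerator τ x τ * (1 - τ) ^ 3 := by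
  have hfactor : 0 ≤ (1 + τ) ^ 3 * (1 - x) :=
    mul_nonneg (pow_nonneg (by linarith) 3) (by linarith)
  rw [curvatureNumerator_boundary]
  linarith [mul_le_mul_of_nonneg_left (one_sub_three_mul_mul_cube_le hx hxτ hτ1) hfactor]

theorem le_curvatureNumerator_mul (hx : 0 ≤ x) (hxy : x ≤ y) (hyτ : y ≤ τ) (hτ1 : τ ≤ 1) :
    (1 - 3 * τ) * (1 + τ) ^ 3 * (1 - x) ^ 4 ≤ curvatureNumerator τ x y * (1 - τ) ^ 3 := by
  have hτ' : 0 ≤ (1 - τ) ^ 3 := pow_nonneg (sub_nonneg.2 hτ1) 3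
  have hxτ : x ≤ τ := hxy.trans hyτ
  calc (1 - 3 * τ) * (1 + τ) ^ 3 * (1 - x) ^ 4
      ≤ min (curvatureNumerator τ x x) (curvatureNumerator τ x τ) * (1 - τ) ^ 3 := by
        rw [min_mul_of_nonneg _ _ hτ']
        exact le_min (le_curvatureNumerator_self_mul hx hxτ hτ1)
          (le_curvatureNumerator_boundary_mul hx hxτ hτ1)
    _ ≤ curvatureNumerator τ x y * (1 - τ) ^ 3 :=
        mul_le_mul_of_nonneg_right (min_le_curvatureNumerator hx hxy hyτ) hτ'

theorem normalizedCurvature_le (hx : 0 ≤ x) (hxy : x ≤ y) (hyτ : y ≤ τ) (hτ1 : τ < 1) :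
    normalizedCurvature τ x y ≤ 1 / ((1 + τ) * (1 - τ) ^ 3) := by
  have hτ : 0 < 1 + τ := by linarith
  have hτ' : 0 < 1 - τ := by linarith
  have hx' : 0 < 1 - x := by linarith
  rw [normalizedCurvature, div_le_div_iff₀ (by positivity) (by positivity)]
  linarith [mul_le_mul_of_nonneg_left
    (curvatureNumerator_mul_le hx hxy (by linarith) hτ1.le) hτ.le]

theorem le_normalizedCurvature (hx : 0 ≤ x) (hxy : x ≤ y) (hyτ : y ≤ τ) (hτ1 : τ < 1) :
    (1 - 3 * τ) * (1 + τ) ^ 2 / (1 - τ) ^ 3 ≤ normalizedCurvature τ x y := by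
  have hτ : 0 < 1 + τ := by linarith
  have hτ' : 0 < 1 - τ := by linarith
  have hx' : 0 < 1 - x := by linarith
  rw [normalizedCurvature, div_le_div_iff₀ (by positivity) (by positivity)]
  linarith [le_curvatureNumerator_mul hx hxy hyτ hτ1.le]

theorem normalizedCurvature_corner (hτ1 : 1 - τ ≠ 0) :
    normalizedCurvature τ τ τ = (1 - 3 * τ) * (1 + τ) ^ 2 / (1 - τ) ^ 3 := by
  rw [normalizedCurvature, curvatureNumerator_boundary]
  field_simp

theorem normalizedCurvature_peak (hτ1 : 1 - τ ≠ 0) (hτ2 : 2 - τ ≠ 0) :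
    normalizedCurvature τ (τ / (2 - τ)) (τ / (2 - τ)) = 1 / ((1 + τ) * (1 - τ) ^ 3) := by
  have hadd : 1 + τ / (2 - τ) = 2 / (2 - τ) := by field_simp; ring
  have hsub : 1 - τ / (2 - τ) = 2 * (1 - τ) / (2 - τ) := by field_simp; ring
  rw [normalizedCurvature, curvatureNumerator_self, hadd, hsub]
  field_simp
  ring

end NormalizedCurvature

section FlagCurvature

/-- The radius `t_o` of the domain `D̃`. -/
noncomputable def outerRadius (μ δ : ℝ) : ℝ := 2 * δ / √(μ ^ 2 - 4 * δ ^ 2)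

/-- The value `t₁` of `t` at which `R̃` is maximal. -/
noncomputable def peakRadius (μ δ : ℝ) : ℝ := √2 * δ / √(μ ^ 2 - 6 * δ ^ 2)

/-- The domain `D̃` of the pairs `(s, t)`. -/
def curvatureDomain (μ δ : ℝ) : Set (ℝ × ℝ) :=
  {p | 0 ≤ p.2 ∧ p.2 ≤ outerRadius μ δ ∧ |p.1| ≤ p.2}

variable {μ δ s t : ℝ}

theorem Rminus_neg (μ δ s t : ℝ) : Rminus μ δ (-s) t = Rminus μ δ s t := by
  simp only [Rminus, even_two.neg_pow, (by decide : Even 4).neg_pow]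

theorem outerRadius_nonneg (hδ : 0 ≤ δ) : 0 ≤ outerRadius μ δ := by
  unfold outerRadius; positivity

theorem peakRadius_nonneg (hδ : 0 ≤ δ) : 0 ≤ peakRadius μ δ := by
  unfold peakRadius; positivity

theorem sq_outerRadius (h : 4 * δ ^ 2 ≤ μ ^ 2) :
    outerRadius μ δ ^ 2 = 4 * δ ^ 2 / (μ ^ 2 - 4 * δ ^ 2) := by
  rw [outerRadius, div_pow, Real.sq_sqrt (sub_nonneg.2 h)]
  ring

theorem sq_outerRadius_lt_one (h : 8 * δ ^ 2 < μ ^ 2) : outerRadius μ δ ^ 2 < 1 := by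
  have hδ : 0 ≤ δ ^ 2 := sq_nonneg δ
  rw [sq_outerRadius (by linarith), div_lt_one (by linarith)]
  linarith

theorem sq_peakRadius (h : 8 * δ ^ 2 < μ ^ 2) :
    peakRadius μ δ ^ 2 = outerRadius μ δ ^ 2 / (2 - outerRadius μ δ ^ 2) := by
  have hδ : 0 ≤ δ ^ 2 := sq_nonneg δ
  have h4 : 0 < μ ^ 2 - 4 * δ ^ 2 := by linarith
  have h6 : 0 < μ ^ 2 - 6 * δ ^ 2 := by linarith
  have hnum : 4 * δ ^ 2 = 2 * (2 * δ ^ 2) := by ring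
  have hsub : 2 - 4 * δ ^ 2 / (μ ^ 2 - 4 * δ ^ 2)
      = 2 * (μ ^ 2 - 6 * δ ^ 2) / (μ ^ 2 - 4 * δ ^ 2) := by
    field_simp; ring
  rw [sq_outerRadius (by linarith), hsub, div_div_div_cancel_right₀ h4.ne', hnum,
    mul_div_mul_left _ _ two_ne_zero, peakRadius, div_pow, mul_pow, Real.sq_sqrt zero_le_two,
    Real.sq_sqrt h6.le]

theorem peakRadius_le_outerRadius (hδ : 0 ≤ δ) (h : 8 * δ ^ 2 < μ ^ 2) :
    peakRadius μ δ ≤ outerRadius μ δ := by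
  refine (sq_le_sq₀ (peakRadius_nonneg hδ) (outerRadius_nonneg hδ)).1 ?_
  rw [sq_peakRadius h]
  exact div_le_self (sq_nonneg _) (by linarith [sq_outerRadius_lt_one h])

theorem diagonal_mem_curvatureDomain (ht : 0 ≤ t) (hto : t ≤ outerRadius μ δ) :
    (t, t) ∈ curvatureDomain μ δ :=
  ⟨ht, hto, (abs_of_nonneg ht).le⟩

theorem sq_le_sq_of_mem_curvatureDomain (hst : (s, t) ∈ curvatureDomain μ δ) :
    s ^ 2 ≤ t ^ 2 ∧ t ^ 2 ≤ outerRadius μ δ ^ 2 :=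
  ⟨sq_le_sq.2 (hst.2.2.trans (le_abs_self t)), pow_le_pow_left₀ hst.1 hst.2.1 2⟩

theorem one_add_sq_outerRadius (h : 4 * δ ^ 2 < μ ^ 2) :
    1 + outerRadius μ δ ^ 2 = μ ^ 2 / (μ ^ 2 - 4 * δ ^ 2) := by
  have h4 : μ ^ 2 - 4 * δ ^ 2 ≠ 0 := (sub_pos.2 h).ne'
  rw [sq_outerRadius h.le]
  field_simp
  ring

theorem one_sub_sq_outerRadius (h : 4 * δ ^ 2 < μ ^ 2) :
    1 - outerRadius μ δ ^ 2 = (μ ^ 2 - 8 * δ ^ 2) / (μ ^ 2 - 4 * δ ^ 2) := by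
  have h4 : μ ^ 2 - 4 * δ ^ 2 ≠ 0 := (sub_pos.2 h).ne'
  rw [sq_outerRadius h.le]
  field_simp
  ring

theorem Rminus_eq_mul_normalizedCurvature (hμ : μ ≠ 0) (h : 4 * δ ^ 2 < μ ^ 2) (s t : ℝ) :
    Rminus μ δ s t = μ * normalizedCurvature (outerRadius μ δ ^ 2) (s ^ 2) (t ^ 2) := by
  have h4 : μ ^ 2 - 4 * δ ^ 2 ≠ 0 := (sub_pos.2 h).ne'
  rw [Rminus, normalizedCurvature, curvatureNumerator, one_add_sq_outerRadius h, ← div_div,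
    ← div_div, ← mul_div_assoc]
  congr 1
  field_simp
  ring

theorem Rminus_outerRadius (hμ : μ ≠ 0) (h : 8 * δ ^ 2 < μ ^ 2) :
    Rminus μ δ (outerRadius μ δ) (outerRadius μ δ)
      = μ ^ 5 * (μ ^ 2 - 16 * δ ^ 2) / (μ ^ 2 - 8 * δ ^ 2) ^ 3 := by
  have h4 : 4 * δ ^ 2 < μ ^ 2 := by linarith [sq_nonneg δ]
  have h4' : μ ^ 2 - 4 * δ ^ 2 ≠ 0 := (sub_pos.2 h4).ne'
  have hsub : 1 - 3 * outerRadius μ δ ^ 2 = (μ ^ 2 - 16 * δ ^ 2) / (μ ^ 2 - 4 * δ ^ 2) := by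
    rw [sq_outerRadius h4.le]
    field_simp
    ring
  rw [Rminus_eq_mul_normalizedCurvature hμ h4, normalizedCurvature_corner
    (sub_pos.2 (sq_outerRadius_lt_one h)).ne', hsub, one_add_sq_outerRadius h4,
    one_sub_sq_outerRadius h4, div_pow, div_pow, div_mul_div_comm, ← pow_succ',
    div_div_div_cancel_right₀ (pow_ne_zero 3 h4')]
  ring

theorem Rminus_peakRadius (hμ : μ ≠ 0) (h : 8 * δ ^ 2 < μ ^ 2) :
    Rminus μ δ (peakRadius μ δ) (peakRadius μ δ)
      = (μ ^ 2 - 4 * δ ^ 2) ^ 4 / (μ * (μ ^ 2 - 8 * δ ^ 2) ^ 3) := by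
  have h4 : 4 * δ ^ 2 < μ ^ 2 := by linarith [sq_nonneg δ]
  have h4' : μ ^ 2 - 4 * δ ^ 2 ≠ 0 := (sub_pos.2 h4).ne'
  have hτ := sq_outerRadius_lt_one h
  rw [Rminus_eq_mul_normalizedCurvature hμ h4, sq_peakRadius h,
    normalizedCurvature_peak (by linarith) (by linarith), one_add_sq_outerRadius h4,
    one_sub_sq_outerRadius h4]
  field_simp

theorem Rminus_outerRadius_le (hμ : 0 < μ) (h : 8 * δ ^ 2 < μ ^ 2)
    (hst : (s, t) ∈ curvatureDomain μ δ) :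
    Rminus μ δ (outerRadius μ δ) (outerRadius μ δ) ≤ Rminus μ δ s t := by
  have h4 : 4 * δ ^ 2 < μ ^ 2 := by linarith [sq_nonneg δ]
  have hτ := sq_outerRadius_lt_one h
  obtain ⟨hxy, hyτ⟩ := sq_le_sq_of_mem_curvatureDomain hst
  simp only [Rminus_eq_mul_normalizedCurvature hμ.ne' h4]
  rw [normalizedCurvature_corner (sub_pos.2 hτ).ne']
  exact mul_le_mul_of_nonneg_left (le_normalizedCurvature (sq_nonneg s) hxy hyτ hτ) hμ.le

theorem Rminus_le_peakRadius (hμ : 0 < μ) (h : 8 * δ ^ 2 < μ ^ 2)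
    (hst : (s, t) ∈ curvatureDomain μ δ) :
    Rminus μ δ s t ≤ Rminus μ δ (peakRadius μ δ) (peakRadius μ δ) := by
  have h4 : 4 * δ ^ 2 < μ ^ 2 := by linarith [sq_nonneg δ]
  have hτ := sq_outerRadius_lt_one h
  obtain ⟨hxy, hyτ⟩ := sq_le_sq_of_mem_curvatureDomain hst
  simp only [Rminus_eq_mul_normalizedCurvature hμ.ne' h4, sq_peakRadius h]
  rw [normalizedCurvature_peak (by linarith) (by linarith)]
  exact mul_le_mul_of_nonneg_left (normalizedCurvature_le (sq_nonneg s) hxy hyτ hτ) hμ.le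

end FlagCurvature

theorem stmt_16_general {μ δ : ℝ} (hμ : 0 < μ) (hδ : 0 ≤ δ) (hreg : 8 * δ ^ 2 < μ ^ 2) :
    outerRadius μ δ < 1 ∧
    IsLeast ((fun p : ℝ × ℝ => Rminus μ δ p.1 p.2) '' curvatureDomain μ δ)
      (μ ^ 5 * (μ ^ 2 - 16 * δ ^ 2) / (μ ^ 2 - 8 * δ ^ 2) ^ 3) ∧
    μ ^ 5 * (μ ^ 2 - 16 * δ ^ 2) / (μ ^ 2 - 8 * δ ^ 2) ^ 3
      = Rminus μ δ (outerRadius μ δ) (outerRadius μ δ) ∧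
    μ ^ 5 * (μ ^ 2 - 16 * δ ^ 2) / (μ ^ 2 - 8 * δ ^ 2) ^ 3
      = Rminus μ δ (-outerRadius μ δ) (outerRadius μ δ) ∧
    IsGreatest ((fun p : ℝ × ℝ => Rminus μ δ p.1 p.2) '' curvatureDomain μ δ)
      ((μ ^ 2 - 4 * δ ^ 2) ^ 4 / (μ * (μ ^ 2 - 8 * δ ^ 2) ^ 3)) ∧
    (μ ^ 2 - 4 * δ ^ 2) ^ 4 / (μ * (μ ^ 2 - 8 * δ ^ 2) ^ 3)
      = Rminus μ δ (peakRadius μ δ) (peakRadius μ δ) ∧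
    (μ ^ 2 - 4 * δ ^ 2) ^ 4 / (μ * (μ ^ 2 - 8 * δ ^ 2) ^ 3)
      = Rminus μ δ (-peakRadius μ δ) (peakRadius μ δ) := by
  rw [Rminus_neg, Rminus_neg, ← Rminus_outerRadius hμ.ne' hreg, ← Rminus_peakRadius hμ.ne' hreg]
  have houter : (outerRadius μ δ, outerRadius μ δ) ∈ curvatureDomain μ δ :=
    diagonal_mem_curvatureDomain (outerRadius_nonneg hδ) le_rfl
  have hpeak : (peakRadius μ δ, peakRadius μ δ) ∈ curvatureDomain μ δ :=
    diagonal_mem_curvatureDomain (peakRadius_nonneg hδ) (peakRadius_le_outerRadius hδ hreg)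
  refine ⟨(sq_lt_one_iff₀ (outerRadius_nonneg hδ)).1 (sq_outerRadius_lt_one hreg),
    ⟨⟨_, houter, rfl⟩, ?_⟩, rfl, rfl, ⟨⟨_, hpeak, rfl⟩, ?_⟩, rfl, rfl⟩
  · rintro _ ⟨⟨s, t⟩, hst, rfl⟩
    exact Rminus_outerRadius_le hμ hreg hst
  · rintro _ ⟨⟨s, t⟩, hst, rfl⟩
    exact Rminus_le_peakRadius hμ hreg hst

/-- for `μ² > 12δ²`, on `D̃ = {0 ≤ t ≤ t_o, |s| ≤ t}` with
`t_o = 2δ/√(μ²-4δ²) < 1`, the min of `R̃` is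
`μ⁵(μ²-16δ²)/(μ²-8δ²)³ = R̃(±t_o,t_o)` and the max is
`(μ²-4δ²)⁴/(μ(μ²-8δ²)³) = R̃(±t₁,t₁)` with `t₁ = √2δ/√(μ²-6δ²)`
(formula (15) of Theorem 1.3(iii)). -/
theorem stmt_16 (μ δ : ℝ) (hμ : 0 < μ) (hδ : 0 < δ)
    (hreg : 12 * δ ^ 2 < μ ^ 2) :
    2 * δ / Real.sqrt (μ ^ 2 - 4 * δ ^ 2) < 1 ∧
    IsLeast
      ((fun p : ℝ × ℝ => Rminus μ δ p.1 p.2) ''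
        {p : ℝ × ℝ | 0 ≤ p.2 ∧ p.2 ≤ 2 * δ / Real.sqrt (μ ^ 2 - 4 * δ ^ 2) ∧
          |p.1| ≤ p.2})
      (μ ^ 5 * (μ ^ 2 - 16 * δ ^ 2) / (μ ^ 2 - 8 * δ ^ 2) ^ 3) ∧
    μ ^ 5 * (μ ^ 2 - 16 * δ ^ 2) / (μ ^ 2 - 8 * δ ^ 2) ^ 3
      = Rminus μ δ (2 * δ / Real.sqrt (μ ^ 2 - 4 * δ ^ 2))
          (2 * δ / Real.sqrt (μ ^ 2 - 4 * δ ^ 2)) ∧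
    μ ^ 5 * (μ ^ 2 - 16 * δ ^ 2) / (μ ^ 2 - 8 * δ ^ 2) ^ 3
      = Rminus μ δ (-(2 * δ / Real.sqrt (μ ^ 2 - 4 * δ ^ 2)))
          (2 * δ / Real.sqrt (μ ^ 2 - 4 * δ ^ 2)) ∧
    IsGreatest
      ((fun p : ℝ × ℝ => Rminus μ δ p.1 p.2) ''
        {p : ℝ × ℝ | 0 ≤ p.2 ∧ p.2 ≤ 2 * δ / Real.sqrt (μ ^ 2 - 4 * δ ^ 2) ∧
          |p.1| ≤ p.2})
      ((μ ^ 2 - 4 * δ ^ 2) ^ 4 / (μ * (μ ^ 2 - 8 * δ ^ 2) ^ 3)) ∧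
    (μ ^ 2 - 4 * δ ^ 2) ^ 4 / (μ * (μ ^ 2 - 8 * δ ^ 2) ^ 3)
      = Rminus μ δ (Real.sqrt 2 * δ / Real.sqrt (μ ^ 2 - 6 * δ ^ 2))
          (Real.sqrt 2 * δ / Real.sqrt (μ ^ 2 - 6 * δ ^ 2)) ∧
    (μ ^ 2 - 4 * δ ^ 2) ^ 4 / (μ * (μ ^ 2 - 8 * δ ^ 2) ^ 3)
      = Rminus μ δ (-(Real.sqrt 2 * δ / Real.sqrt (μ ^ 2 - 6 * δ ^ 2)))
          (Real.sqrt 2 * δ / Real.sqrt (μ ^ 2 - 6 * δ ^ 2)) :=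
  stmt_16_general hμ hδ.le (by linarith [sq_nonneg δ])
end
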